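/- Let μ be a determinate measure on ℝ with all moments finite and infinite support, such that supp(μ) ⊆ [0,∞). Then for each k ∈ {0, 1, 2}, the polynomials are dense in L²(x^k·μ), where x^k·μ denotes the measure with density x ↦ x^k with respect to μ (i.e., the density index of μ satisfies δ(μ) ≥ 2). -/

import Mathlib

open MeasureTheory Polynomial Filter

noncomputable section

/-- A measure on `ℝ` has all moments finite. -/
def HasAllMoments (μ : Measure ℝ) : Prop :=
  ∀ n : ℕ, Integrable (fun x : ℝ => |x| ^ n) μ

/-- The (topological) support of a measure on `ℝ`: points all of whose
neighborhoods have positive measure. -/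
def mSupp (μ : Measure ℝ) : Set ℝ :=
  {x : ℝ | ∀ U ∈ nhds x, μ U ≠ 0}

/-- A measure with all moments finite is determinate if it is the unique measure
with all moments finite having its moment sequence. -/
def IsDeterminate (μ : Measure ℝ) : Prop :=
  ∀ ν : Measure ℝ, HasAllMoments ν →
    (∀ n : ℕ, ∫ x, x ^ n ∂ν = ∫ x, x ^ n ∂μ) → ν = μ

/-- The complex polynomial functions are dense in `L²(ν)`. -/
def PolyDense (ν : Measure ℝ) : Prop :=
  Dense {f : Lp ℂ 2 ν | ∃ p : Polynomial ℂ, ⇑f =ᵐ[ν] fun x : ℝ => p.eval (x : ℂ)}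
lemma sos_aux (n : ℕ) : ∀ q : ℝ[X], q.natDegree ≤ n → (∀ x : ℝ, 0 ≤ q.eval x) →
    ∃ r : ℂ[X], ∀ x : ℝ, ‖r.eval (x : ℂ)‖ ^ 2 = q.eval x := by
  induction n using Nat.strong_induction_on with
  | _ n ih =>
  intro q hn hq
  by_cases h0 : q.natDegree = 0
  · obtain ⟨c, rfl⟩ := natDegree_eq_zero.1 h0
    have hc : 0 ≤ c := by simpa using hq 0
    refine ⟨C ((Real.sqrt c : ℝ) : ℂ), fun x => ?_⟩
    simp [Complex.norm_real, Real.sq_sqrt hc]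
  have hq0 : q ≠ 0 := by rintro rfl; simp at h0
  obtain ⟨z, hz⟩ := Complex.exists_root (f := q.map (algebraMap ℝ ℂ)) (by
    rw [degree_map]; exact natDegree_pos_iff_degree_pos.1 (Nat.pos_of_ne_zero h0))
  have hz' : aeval z q = 0 := by
    rw [IsRoot, eval_map_algebraMap] at hz; exact hz
  have key : ∃ t : ℝ[X], t.natDegree < q.natDegree ∧ (∀ x, 0 ≤ t.eval x) ∧
      ∀ x : ℝ, q.eval x = ‖(x : ℂ) - z‖ ^ 2 * t.eval x := by
    by_cases him : z.im = 0
    · obtain ⟨a, rfl⟩ : ∃ a : ℝ, z = (a : ℂ) := ⟨z.re, by apply Complex.ext <;> simp [him]⟩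
      have ha : q.IsRoot a := by
        have h1 : ((q.eval a : ℝ) : ℂ) = 0 := by
          rw [← hz']
          have := aeval_algebraMap_apply ℂ a q
          simpa using this.symm
        exact_mod_cast h1
      obtain ⟨s, hs⟩ := dvd_iff_isRoot.2 ha
      have hsq : ∀ x, q.eval x = (x - a) * s.eval x := by intro x; rw [hs]; simp
      have hcont : ∀ p : ℝ[X], Filter.Tendsto (fun x => p.eval x) (nhds a) (nhds (p.eval a)) :=
        fun p => p.continuous.tendsto a
      have hsa : s.IsRoot a := by
        apply le_antisymm
        · refine le_of_tendsto ((hcont s).mono_left (nhdsWithin_le_nhds (s := Set.Iio a))) ?_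
          filter_upwards [self_mem_nhdsWithin] with x hx
          have hx : x < a := hx
          have := hq x
          rw [hsq] at this
          by_contra hh
          push Not at hh
          nlinarith [mul_pos (sub_pos.2 hx) hh]
        · refine ge_of_tendsto ((hcont s).mono_left (nhdsWithin_le_nhds (s := Set.Ioi a))) ?_
          filter_upwards [self_mem_nhdsWithin] with x hx
          have hx : a < x := hx
          have := hq x
          rw [hsq] at this
          by_contra hh
          push Not at hh
          nlinarith [mul_pos (sub_pos.2 hx) (neg_pos.2 hh)]
      obtain ⟨t, ht⟩ := dvd_iff_isRoot.2 hsa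
      have htq : ∀ x, q.eval x = (x - a) ^ 2 * t.eval x := by intro x; rw [hsq, ht]; simp; ring
      have ht0 : t ≠ 0 := by rintro rfl; apply hq0; rw [hs, ht]; simp
      refine ⟨t, ?_, ?_, ?_⟩
      · have : q = (X - C a) * ((X - C a) * t) := by rw [hs, ht]
        rw [this, natDegree_mul (X_sub_C_ne_zero a) (mul_ne_zero (X_sub_C_ne_zero a) ht0),
          natDegree_mul (X_sub_C_ne_zero a) ht0, natDegree_X_sub_C]
        omega
      · have hne : ∀ x, x ≠ a → 0 ≤ t.eval x := by
          intro x hx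
          have h1 := hq x
          rw [htq] at h1
          exact nonneg_of_mul_nonneg_right h1 (by have := sub_ne_zero.2 hx; positivity)
        intro x
        by_cases hx : x = a
        · rw [hx]
          refine ge_of_tendsto ((hcont t).mono_left (nhdsWithin_le_nhds (s := {a}ᶜ))) ?_
          filter_upwards [self_mem_nhdsWithin] with x hx using hne x hx
        · exact hne x hx
      · intro x
        rw [htq, ← Complex.ofReal_sub, Complex.norm_real, Real.norm_eq_abs, sq_abs]
    · obtain ⟨t, ht⟩ := quadratic_dvd_of_aeval_eq_zero_im_ne_zero q hz' him
      have he : ∀ x : ℝ, q.eval x = ‖(x : ℂ) - z‖ ^ 2 * t.eval x := by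
        intro x
        rw [ht, eval_mul]
        congr 1
        rw [← Complex.normSq_eq_norm_sq, ← Complex.normSq_eq_norm_sq, Complex.normSq_apply,
          Complex.normSq_apply]
        simp
        ring
      have hpos : ∀ x : ℝ, 0 < ‖(x : ℂ) - z‖ ^ 2 := by
        intro x
        have : (x : ℂ) - z ≠ 0 := by
          intro h
          apply him
          have := congrArg Complex.im h
          simpa using this
        positivity
      have ht0 : t ≠ 0 := by rintro rfl; apply hq0; rw [ht]; simp
      refine ⟨t, ?_, ?_, he⟩
      · have hm : (X ^ 2 - C (2 * z.re) * X + C (‖z‖ ^ 2) : ℝ[X]).natDegree = 2 := by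
          compute_degree!
        have hm0 : (X ^ 2 - C (2 * z.re) * X + C (‖z‖ ^ 2) : ℝ[X]) ≠ 0 := by
          intro h; rw [h] at hm; simp at hm
        rw [ht, natDegree_mul hm0 ht0, hm]
        omega
      · intro x
        have h1 := hq x
        rw [he] at h1
        exact nonneg_of_mul_nonneg_right h1 (hpos x)
  obtain ⟨t, htd, htn, hte⟩ := key
  obtain ⟨r, hr⟩ := ih t.natDegree (by omega) t le_rfl htn
  refine ⟨(X - C z) * r, fun x => ?_⟩
  rw [hte, ← hr]
  simp [mul_pow]

/-- Continuous functions of polynomial growth. -/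
def PG : Submodule ℝ (ℝ → ℝ) where
  carrier := {f | Continuous f ∧ ∃ q : ℝ[X], ∀ x, |f x| ≤ q.eval x}
  add_mem' := by
    rintro f g ⟨hf, p, hp⟩ ⟨hg, q, hq⟩
    refine ⟨hf.add hg, p + q, fun x => ?_⟩
    rw [eval_add]
    exact (abs_add_le _ _).trans (add_le_add (hp x) (hq x))
  zero_mem' := ⟨continuous_zero, 0, fun x => by simp⟩
  smul_mem' := by
    rintro c f ⟨hf, p, hp⟩
    refine ⟨hf.const_smul c, C |c| * p, fun x => ?_⟩
    simp only [Pi.smul_apply, smul_eq_mul, abs_mul, eval_mul, eval_C]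
    exact mul_le_mul_of_nonneg_left (hp x) (abs_nonneg c)

lemma poly_mem_PG (q : ℝ[X]) : (fun x => q.eval x) ∈ PG := by
  refine ⟨q.continuous, 1 + q ^ 2, fun x => ?_⟩
  simp only [eval_add, eval_one, eval_pow]
  rw [abs_le]
  constructor <;> nlinarith [sq_nonneg (q.eval x + 1), sq_nonneg (q.eval x - 1)]

/-- A polynomial as an element of `PG`. -/
def pPG (q : ℝ[X]) : PG := ⟨fun x => q.eval x, poly_mem_PG q⟩

lemma poly_int {μ : Measure ℝ} (hmom : HasAllMoments μ) (q : ℝ[X]) :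
    Integrable (fun x => q.eval x) μ := by
  simp only [eval_eq_sum_range]
  refine integrable_finsetSum _ fun i _ => Integrable.const_mul ?_ _
  refine (hmom i).mono' (by fun_prop) (Eventually.of_forall fun x => ?_)
  simp

lemma ext_exists (μ : Measure ℝ) (hmom : HasAllMoments μ) (φ : PG) :
    ∃ Λ : PG →ₗ[ℝ] ℝ, (∀ f : PG, (∀ x, 0 ≤ f.1 x) → 0 ≤ Λ f) ∧
      (∀ q : ℝ[X], Λ (pPG q) = ∫ x, q.eval x ∂μ) ∧
      (∀ c, (∀ q : ℝ[X], (∀ x, φ.1 x ≤ q.eval x) → c ≤ ∫ x, q.eval x ∂μ) → c ≤ Λ φ) := by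
  set L : ℝ[X] → ℝ := fun q => ∫ x, q.eval x ∂μ with hL
  have Lmono : ∀ p q : ℝ[X], (∀ x, p.eval x ≤ q.eval x) → L p ≤ L q := fun p q h =>
    integral_mono (poly_int hmom p) (poly_int hmom q) h
  have Ladd : ∀ p q : ℝ[X], L (p + q) = L p + L q := fun p q => by
    simp only [hL, eval_add]
    exact integral_add (poly_int hmom p) (poly_int hmom q)
  have Lsmul : ∀ (c : ℝ) (q : ℝ[X]), L (C c * q) = c * L q := fun c q => by
    simp only [hL, eval_mul, eval_C]
    exact integral_const_mul _ _
  let N : PG → ℝ := fun f => sInf (L '' {q | ∀ x, f.1 x ≤ q.eval x})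
  have Na : ∀ (f : PG) (q : ℝ[X]), (∀ x, f.1 x ≤ q.eval x) → N f ≤ L q := by
    intro f q h
    refine csInf_le ?_ ⟨q, h, rfl⟩
    obtain ⟨-, p, hp⟩ := f.2
    refine ⟨L (-p), ?_⟩
    rintro _ ⟨r, hr, rfl⟩
    refine Lmono _ _ fun x => ?_
    rw [eval_neg]
    exact (neg_le.1 ((neg_le_abs _).trans (hp x))).trans (hr x)
  have Nb : ∀ (f : PG) (c : ℝ), (∀ q : ℝ[X], (∀ x, f.1 x ≤ q.eval x) → c ≤ L q) → c ≤ N f := by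
    intro f c h
    refine le_csInf ?_ ?_
    · obtain ⟨-, p, hp⟩ := f.2
      exact ⟨L p, p, fun x => (le_abs_self _).trans (hp x), rfl⟩
    · rintro _ ⟨r, hr, rfl⟩
      exact h r hr
  have Nh1 : ∀ c : ℝ, 0 < c → ∀ f, N (c • f) ≤ c * N f := by
    intro c hc f
    rw [← div_le_iff₀' hc]
    refine Nb _ _ fun q hq => ?_
    rw [div_le_iff₀' hc, ← Lsmul]
    refine Na _ _ fun x => ?_
    rw [eval_mul, eval_C]
    exact mul_le_mul_of_nonneg_left (hq x) hc.le
  have Nhom : ∀ c : ℝ, 0 < c → ∀ f, N (c • f) = c * N f := by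
    intro c hc f
    refine le_antisymm (Nh1 c hc f) ?_
    have := Nh1 c⁻¹ (inv_pos.2 hc) (c • f)
    rw [smul_smul, inv_mul_cancel₀ hc.ne', one_smul] at this
    rwa [← div_eq_inv_mul, le_div_iff₀' hc] at this
  have Nadd : ∀ f g, N (f + g) ≤ N f + N g := by
    intro f g
    rw [← sub_le_iff_le_add]
    refine Nb _ _ fun p hp => ?_
    rw [sub_le_iff_le_add, ← sub_le_iff_le_add']
    refine Nb _ _ fun q hq => ?_
    rw [sub_le_iff_le_add', ← Ladd]
    refine Na _ _ fun x => ?_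
    rw [eval_add]
    exact add_le_add (hp x) (hq x)
  have N0 : 0 ≤ N 0 := Nb _ _ fun q hq => by
    have := Lmono 0 q (fun x => by simpa using hq x)
    simpa [hL] using this
  have hker : ∀ c : ℝ, c • φ = 0 → c • (N φ) = 0 := by
    intro c hc
    rcases smul_eq_zero.1 hc with h | h
    · simp [h]
    · have h2 := Nhom 2 (by norm_num) 0
      rw [smul_zero] at h2
      have : N φ = 0 := by rw [h]; linarith
      simp [this]
  obtain ⟨Λ, hΛ1, hΛ2⟩ := exists_extension_of_le_sublinear
    (LinearPMap.mkSpanSingleton' φ (N φ) hker) N Nhom Nadd (by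
      rintro ⟨y, hy⟩
      obtain ⟨c, rfl⟩ := Submodule.mem_span_singleton.1 hy
      rw [LinearPMap.mkSpanSingleton'_apply]
      rcases lt_trichotomy c 0 with h | h | h
      · have h1 := Nadd (c • φ) ((-c) • φ)
        rw [← add_smul, add_neg_cancel, zero_smul, Nhom (-c) (neg_pos.2 h)] at h1
        simp only [smul_eq_mul, RingHom.id_apply]
        linarith
      · subst h; simp [N0]
      · rw [Nhom c h]; simp)
  have hφ : Λ φ = N φ := by
    have hm : φ ∈ Submodule.span ℝ {φ} :=
      Submodule.mem_span_singleton_self φ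
    rw [hΛ1 ⟨φ, hm⟩]
    apply LinearPMap.mkSpanSingleton'_apply_self
  refine ⟨Λ, ?_, ?_, ?_⟩
  · intro f hf
    have h1 := hΛ2 (-f)
    have h2 := Na (-f) 0 (fun x => by
      have := hf x
      change -(f.1 x) ≤ _
      simpa using this)
    rw [map_neg] at h1
    have h3 : L 0 = 0 := by simp [hL]
    linarith
  · intro q
    change _ = L q
    have h1 := (hΛ2 (pPG q)).trans (Na (pPG q) q fun x => le_rfl)
    have h2 := (hΛ2 (-pPG q)).trans (Na (-pPG q) (C (-1) * q) fun x => by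
      change -(q.eval x) ≤ _
      simp)
    rw [map_neg, Lsmul] at h2
    linarith
  · intro c hc
    rw [hφ]
    exact Nb _ _ hc

lemma cc_mem_PG (f : CompactlySupportedContinuousMap ℝ ℝ) : (fun x => f x) ∈ PG := by
  obtain ⟨M, hM⟩ := f.continuous.bounded_above_of_compact_support f.hasCompactSupport
  exact ⟨f.continuous, C M, fun x => by simpa using hM x⟩

/-- Inclusion of compactly supported functions into `PG`. -/
def ccPG : CompactlySupportedContinuousMap ℝ ℝ →ₗ[ℝ] PG where
  toFun f := ⟨fun x => f x, cc_mem_PG f⟩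
  map_add' f g := rfl
  map_smul' c f := rfl

/-- Cutoff functions. -/
def cutoff (n : ℕ) (x : ℝ) : ℝ := max 0 (1 - |x| / (n + 1))

lemma cutoff_cont (n : ℕ) : Continuous (cutoff n) := by
  unfold cutoff; fun_prop

lemma cutoff_nonneg (n : ℕ) (x : ℝ) : 0 ≤ cutoff n x := le_max_left _ _

lemma cutoff_le_one (n : ℕ) (x : ℝ) : cutoff n x ≤ 1 := by
  unfold cutoff
  have : 0 ≤ |x| / (n + 1) := by positivity
  exact max_le zero_le_one (by linarith)

lemma cutoff_ge (n : ℕ) (x : ℝ) : 1 - cutoff n x ≤ |x| / (n + 1) := by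
  unfold cutoff
  have := le_max_right 0 (1 - |x| / ((n : ℝ) + 1))
  linarith

lemma cutoff_mono (x : ℝ) : Monotone (fun n => cutoff n x) := by
  intro m n h
  unfold cutoff
  have : (m : ℝ) ≤ n := by exact_mod_cast h
  dsimp only
  gcongr

lemma cutoff_tendsto (x : ℝ) : Tendsto (fun n => cutoff n x) atTop (nhds 1) := by
  have h : Tendsto (fun n : ℕ => 1 - |x| / ((n : ℝ) + 1)) atTop (nhds (1 - 0)) := by
    refine tendsto_const_nhds.sub ?_
    have := (tendsto_one_div_add_atTop_nhds_zero_nat (𝕜 := ℝ)).const_mul |x|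
    simpa [div_eq_mul_inv] using this
  rw [sub_zero] at h
  refine tendsto_of_tendsto_of_tendsto_of_le_of_le h tendsto_const_nhds
    (fun n => le_max_right _ _) (fun n => cutoff_le_one n x)

lemma cutoff_supp (n : ℕ) : HasCompactSupport (cutoff n) := by
  refine HasCompactSupport.intro (K := Set.Icc (-((n : ℝ) + 1)) (n + 1)) isCompact_Icc ?_
  intro x hx
  have h : (n : ℝ) + 1 < |x| := by
    by_contra hh
    push Not at hh
    exact hx (abs_le.1 hh)
  unfold cutoff
  rw [max_eq_left]
  have : 1 ≤ |x| / ((n : ℝ) + 1) := by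
    rw [le_div_iff₀ (by positivity)]; linarith
  linarith

/-- Truncation. -/
def trunc (f : PG) (n : ℕ) : CompactlySupportedContinuousMap ℝ ℝ where
  toFun x := f.1 x * cutoff n x
  continuous_toFun := f.2.1.mul (cutoff_cont n)
  hasCompactSupport' := (cutoff_supp n).mul_left

lemma rep_exists (μ : Measure ℝ) (Λ : PG →ₗ[ℝ] ℝ) (hpos : ∀ f : PG, (∀ x, 0 ≤ f.1 x) → 0 ≤ Λ f)
    (hpoly : ∀ q : ℝ[X], Λ (pPG q) = ∫ x, q.eval x ∂μ) :
    ∃ ν : Measure ℝ, HasAllMoments ν ∧ (∀ n : ℕ, ∫ x, x ^ n ∂ν = ∫ x, x ^ n ∂μ) ∧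
      ∀ f, ∫ x, f x ∂ν = Λ (ccPG f) := by
  let Λ' : PositiveLinearMap ℝ (CompactlySupportedContinuousMap ℝ ℝ) ℝ :=
    PositiveLinearMap.mk₀ (Λ.comp ccPG) (fun f hf => hpos _ (fun x => hf x))
  let ν := RealRMK.rieszMeasure Λ'
  have hν : ∀ f, ∫ x, f x ∂ν = Λ (ccPG f) := fun f => RealRMK.integral_rieszMeasure Λ' f
  have mono : ∀ f g : PG, (∀ x, f.1 x ≤ g.1 x) → Λ f ≤ Λ g := by
    intro f g h
    have := hpos (g - f) (fun x => by
      change 0 ≤ g.1 x - f.1 x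
      linarith [h x])
    rw [map_sub] at this
    linarith
  have hint : ∀ f : PG, (∀ x, 0 ≤ f.1 x) → Integrable f.1 ν := by
    intro f hf
    refine ⟨f.2.1.aestronglyMeasurable, ?_⟩
    rw [hasFiniteIntegral_iff_ofReal (Eventually.of_forall hf)]
    have ht := lintegral_tendsto_of_tendsto_of_monotone (μ := ν)
      (f := fun n x => ENNReal.ofReal (trunc f n x)) (F := fun x => ENNReal.ofReal (f.1 x))
      (fun n => ((trunc f n).continuous.measurable.ennreal_ofReal).aemeasurable)
      (Eventually.of_forall fun x m n h => ENNReal.ofReal_le_ofReal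
        (mul_le_mul_of_nonneg_left (cutoff_mono x h) (hf x)))
      (Eventually.of_forall fun x => (ENNReal.continuous_ofReal.tendsto _).comp (by
        have := (cutoff_tendsto x).const_mul (f.1 x)
        rwa [mul_one] at this))
    refine lt_of_le_of_lt (le_of_tendsto' ht (fun n => ?_)) (ENNReal.ofReal_lt_top (r := Λ f))
    rw [← ofReal_integral_eq_lintegral_ofReal]
    · refine ENNReal.ofReal_le_ofReal ?_
      rw [hν]
      refine mono _ _ fun x => ?_
      exact mul_le_of_le_one_right (hf x) (cutoff_le_one n x)
    · exact (trunc f n).continuous.integrable_of_hasCompactSupport (trunc f n).hasCompactSupport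
    · exact Eventually.of_forall fun x => mul_nonneg (hf x) (cutoff_nonneg n x)
  have heq : ∀ f : PG, Integrable f.1 ν → ∫ x, f.1 x ∂ν = Λ f := by
    intro f hf
    have h1 : Tendsto (fun n => ∫ x, trunc f n x ∂ν) atTop (nhds (∫ x, f.1 x ∂ν)) := by
      refine tendsto_integral_of_dominated_convergence (fun x => ‖f.1 x‖)
        (fun n => (trunc f n).continuous.aestronglyMeasurable) hf.norm ?_ ?_
      · intro n
        refine Eventually.of_forall fun x => ?_
        change ‖f.1 x * cutoff n x‖ ≤ _
        rw [norm_mul, Real.norm_of_nonneg (cutoff_nonneg n x)]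
        exact mul_le_of_le_one_right (norm_nonneg _) (cutoff_le_one n x)
      · refine Eventually.of_forall fun x => ?_
        have := (cutoff_tendsto x).const_mul (f.1 x)
        rwa [mul_one] at this
    obtain ⟨-, q, hq⟩ := f.2
    have h2 : Tendsto (fun n => ∫ x, trunc f n x ∂ν) atTop (nhds (Λ f)) := by
      rw [tendsto_iff_norm_sub_tendsto_zero]
      have hz := (tendsto_one_div_add_atTop_nhds_zero_nat (𝕜 := ℝ)).mul_const
        (Λ (pPG (q * (1 + X ^ 2))))
      rw [zero_mul] at hz
      refine squeeze_zero (fun n => norm_nonneg _) (fun n => ?_) hz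
      rw [hν, ← map_sub, ← smul_eq_mul, ← map_smul, Real.norm_eq_abs]
      have hb : ∀ x, |f.1 x * cutoff n x - f.1 x| ≤
          1 / ((n : ℝ) + 1) * (q.eval x * (1 + x ^ 2)) := by
        intro x
        have e1 : |f.1 x * cutoff n x - f.1 x| = |f.1 x| * (1 - cutoff n x) := by
          rw [← mul_sub_one, abs_mul, abs_sub_comm, abs_of_nonneg (a := 1 - cutoff n x)]
          linarith [cutoff_le_one n x]
        rw [e1]
        have h3 : |x| ≤ 1 + x ^ 2 := by
          rw [abs_le]; constructor <;> nlinarith [sq_nonneg (x + 1), sq_nonneg (x - 1)]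
        have hq0 := (abs_nonneg _).trans (hq x)
        calc |f.1 x| * (1 - cutoff n x) ≤ q.eval x * (|x| / (n + 1)) :=
              mul_le_mul (hq x) (cutoff_ge n x) (by linarith [cutoff_le_one n x]) hq0
          _ ≤ q.eval x * ((1 + x ^ 2) / (n + 1)) := by gcongr
          _ = _ := by ring
      rw [abs_le, ← map_neg]
      constructor
      · refine mono _ _ fun x => ?_
        have := (abs_le.1 (hb x)).1
        change -(1 / ((n : ℝ) + 1) * ((q * (1 + X ^ 2)).eval x)) ≤ f.1 x * cutoff n x - f.1 x
        simpa using this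
      · refine mono _ _ fun x => ?_
        have := (abs_le.1 (hb x)).2
        change f.1 x * cutoff n x - f.1 x ≤ (1 / ((n : ℝ) + 1) * ((q * (1 + X ^ 2)).eval x))
        simpa using this
    exact tendsto_nhds_unique h1 h2
  have hmom : HasAllMoments ν := by
    intro n
    refine hint ⟨fun x => |x| ^ n, by fun_prop, 1 + X ^ (2 * n), fun x => ?_⟩
      (fun x => by dsimp only; positivity)
    rw [abs_of_nonneg (by positivity)]
    simp only [eval_add, eval_one, eval_pow, eval_X]
    have : x ^ (2 * n) = (|x| ^ n) ^ 2 := by rw [← pow_mul, mul_comm n 2, pow_mul, pow_mul, sq_abs]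
    rw [this]
    nlinarith [sq_nonneg (|x| ^ n - 1)]
  refine ⟨ν, hmom, fun n => ?_, hν⟩
  have h1 := heq (pPG (X ^ n)) (poly_int hmom _)
  rw [hpoly] at h1
  simpa [pPG] using h1

/-- The bump function at `-1`. -/
def bump : CompactlySupportedContinuousMap ℝ ℝ where
  toFun x := cutoff 0 (x + 1)
  continuous_toFun := (cutoff_cont 0).comp (by fun_prop)
  hasCompactSupport' := (cutoff_supp 0).comp_homeomorph (Homeomorph.addRight (1 : ℝ))

lemma step_B (μ : Measure ℝ) (hmom : HasAllMoments μ) (hdet : IsDeterminate μ)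
    (hae : ∀ᵐ x ∂μ, 0 ≤ x) (ε : ℝ) (hε : 0 < ε) :
    ∃ s : ℂ[X], ∃ q : ℝ[X], (∀ x : ℝ, ‖1 - ((x : ℂ) + 1) * s.eval (x : ℂ)‖ ^ 2 ≤ q.eval x) ∧
      ∫ x, q.eval x ∂μ < ε := by
  obtain ⟨Λ, h1, h2, h3⟩ := ext_exists μ hmom (ccPG bump)
  obtain ⟨ν, hν1, hν2, hν3⟩ := rep_exists μ Λ h1 h2
  obtain rfl := hdet ν hν1 hν2
  have hb : Λ (ccPG bump) = 0 := by
    rw [← hν3]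
    refine integral_eq_zero_of_ae ?_
    filter_upwards [hae] with x hx
    change max 0 (1 - |x + 1| / (((0 : ℕ) : ℝ) + 1)) = 0
    rw [abs_of_nonneg (by linarith)]
    simp [hx]
  obtain ⟨q, hq, hqe⟩ : ∃ q : ℝ[X], (∀ x, (ccPG bump).1 x ≤ q.eval x) ∧
      ∫ x, q.eval x ∂ν < ε := by
    by_contra hh
    push Not at hh
    have := h3 ε hh
    linarith
  have hq0 : ∀ x, 0 ≤ q.eval x := fun x => (cutoff_nonneg 0 (x + 1)).trans (hq x)
  have hq1 : 1 ≤ q.eval (-1) := by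
    refine le_trans ?_ (hq (-1))
    change 1 ≤ max 0 (1 - |(-1 : ℝ) + 1| / (((0 : ℕ) : ℝ) + 1))
    simp
  obtain ⟨r, hr⟩ := sos_aux _ q le_rfl hq0
  set c := r.eval (-1 : ℂ) with hc
  have hc1 : 1 ≤ ‖c‖ ^ 2 := by
    have := hr (-1)
    push_cast at this
    rw [hc, this]; exact hq1
  have hc0 : c ≠ 0 := by
    intro h; rw [h] at hc1; norm_num at hc1
  have hroot : (1 - C c⁻¹ * r).IsRoot (-1) := by
    simp [IsRoot, ← hc, hc0]
  obtain ⟨s, hs⟩ := dvd_iff_isRoot.2 hroot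
  refine ⟨s, q, fun x => ?_, hqe⟩
  have e : ((x : ℂ) + 1) * s.eval (x : ℂ) = 1 - c⁻¹ * r.eval (x : ℂ) := by
    have := congrArg (fun p => p.eval (x : ℂ)) hs
    simp at this
    rw [this]
  rw [e, sub_sub_cancel, norm_mul, mul_pow, hr, norm_inv, inv_pow]
  exact mul_le_of_le_one_left (hq0 x) (inv_le_one_of_one_le₀ hc1)

/-- Approximability by polynomials. -/
def Apx (ν : Measure ℝ) (g : ℝ → ℂ) : Prop :=
  ∀ ε : ENNReal, ε ≠ 0 → ∃ p : ℂ[X], eLpNorm (fun x : ℝ => g x - p.eval (x : ℂ)) 2 ν ≤ ε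

lemma cpoly_cont (p : ℂ[X]) : Continuous (fun x : ℝ => p.eval (x : ℂ)) :=
  p.continuous.comp Complex.continuous_ofReal

lemma apx_poly (ν : Measure ℝ) (p : ℂ[X]) : Apx ν (fun x => p.eval (x : ℂ)) :=
  fun ε _ => ⟨p, by simp⟩

lemma apx_lim {ν : Measure ℝ} {g : ℝ → ℂ} (hg : Continuous g)
    (h : ∀ ε : ENNReal, ε ≠ 0 → ∃ k : ℝ → ℂ, Continuous k ∧ Apx ν k ∧
      eLpNorm (fun x => g x - k x) 2 ν ≤ ε) : Apx ν g := by
  intro ε hε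
  have hε2 : ε / 2 ≠ 0 := (ENNReal.half_pos hε).ne'
  obtain ⟨k, hk, hk1, hk2⟩ := h (ε / 2) hε2
  obtain ⟨p, hp⟩ := hk1 (ε / 2) hε2
  refine ⟨p, ?_⟩
  have e : (fun x : ℝ => g x - p.eval (x : ℂ)) =
      (fun x => g x - k x) + (fun x : ℝ => k x - p.eval (x : ℂ)) := by
    ext x; simp
  rw [e, ← ENNReal.add_halves ε]
  exact (eLpNorm_add_le (hg.sub hk).aestronglyMeasurable
    (hk.sub (cpoly_cont p)).aestronglyMeasurable (by norm_num)).trans (add_le_add hk2 hp)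

lemma apx_add {ν : Measure ℝ} {g h : ℝ → ℂ} (hg : Continuous g) (hh : Continuous h)
    (ag : Apx ν g) (ah : Apx ν h) : Apx ν (fun x => g x + h x) := by
  intro ε hε
  have hε2 : ε / 2 ≠ 0 := (ENNReal.half_pos hε).ne'
  obtain ⟨p, hp⟩ := ag (ε / 2) hε2
  obtain ⟨q, hq⟩ := ah (ε / 2) hε2
  refine ⟨p + q, ?_⟩
  have e : (fun x : ℝ => g x + h x - (p + q).eval (x : ℂ)) =
      (fun x : ℝ => g x - p.eval (x : ℂ)) + (fun x : ℝ => h x - q.eval (x : ℂ)) := by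
    ext x; simp; ring
  rw [e, ← ENNReal.add_halves ε]
  exact (eLpNorm_add_le (hg.sub (cpoly_cont p)).aestronglyMeasurable
    (hh.sub (cpoly_cont q)).aestronglyMeasurable (by norm_num)).trans (add_le_add hp hq)

lemma apx_smul {ν : Measure ℝ} {g : ℝ → ℂ} (c : ℂ)
    (ag : Apx ν g) : Apx ν (fun x => c * g x) := by
  intro ε hε
  obtain ⟨p, hp⟩ := ag (ε / ‖c‖ₑ) (ENNReal.div_ne_zero.2 ⟨hε, enorm_ne_top⟩)
  refine ⟨C c * p, ?_⟩
  have e : (fun x : ℝ => c * g x - (C c * p).eval (x : ℂ)) =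
      c • (fun x : ℝ => g x - p.eval (x : ℂ)) := by
    ext x; simp; ring
  rw [e, eLpNorm_const_smul]
  exact (mul_le_mul_right hp _).trans ENNReal.mul_div_le

lemma apx_congr {ν : Measure ℝ} {g h : ℝ → ℂ} (e : g =ᵐ[ν] h) (ag : Apx ν g) : Apx ν h := by
  intro ε hε
  obtain ⟨p, hp⟩ := ag ε hε
  refine ⟨p, le_of_eq_of_le (eLpNorm_congr_ae ?_) hp⟩
  filter_upwards [e] with x hx
  rw [hx]

/-- The basic function. -/
def bb (x : ℝ) : ℝ := 1 / (1 + |x|)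

lemma bb_cont : Continuous bb := by
  unfold bb
  refine continuous_const.div (by fun_prop) (fun x => by positivity)

lemma bb_contC : Continuous (fun x => (bb x : ℂ)) := Complex.continuous_ofReal.comp bb_cont

lemma bb_pos (x : ℝ) : 0 < bb x := by unfold bb; positivity

lemma bb_le (x : ℝ) : bb x ≤ 1 := by
  unfold bb
  rw [div_le_one (by positivity)]
  linarith [abs_nonneg x]

lemma apx_mulb {ν : Measure ℝ} (hae : ∀ᵐ x ∂ν, 0 ≤ x) (hb : Apx ν (fun x => (bb x : ℂ)))
    {g : ℝ → ℂ} (hg : Continuous g) (ag : Apx ν g) : Apx ν (fun x => (bb x : ℂ) * g x) := by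
  refine apx_lim (bb_contC.mul hg) fun ε hε => ?_
  obtain ⟨p, hp⟩ := ag ε hε
  refine ⟨fun x => (bb x : ℂ) * p.eval (x : ℂ), bb_contC.mul (cpoly_cont p), ?_, ?_⟩
  · obtain ⟨s, hs⟩ := dvd_iff_isRoot.2 (show (p - C (p.eval (-1))).IsRoot (-1) by simp [IsRoot])
    refine apx_congr ?_ (apx_add (cpoly_cont s) (continuous_const.mul bb_contC) (apx_poly ν s)
      (apx_smul (p.eval (-1)) hb))
    filter_upwards [hae] with x hx
    have e := congrArg (fun p => p.eval (x : ℂ)) hs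
    simp only [eval_sub, eval_C, eval_mul, eval_X] at e
    have e' : p.eval (x : ℂ) = p.eval (-1) + ((x : ℂ) - -1) * s.eval (x : ℂ) := by
      rw [← e]; ring
    have hx1 : (1 + (x : ℂ)) ≠ 0 := by
      have : (1 + x) ≠ 0 := by positivity
      exact_mod_cast this
    change s.eval (x : ℂ) + p.eval (-1) * (bb x : ℂ) = (bb x : ℂ) * p.eval (x : ℂ)
    rw [e', bb, abs_of_nonneg hx]
    push_cast
    field_simp
    ring
  · refine le_trans (eLpNorm_mono fun x => ?_) hp
    rw [← mul_sub, norm_mul, Complex.norm_real, Real.norm_of_nonneg (bb_pos x).le]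
    exact mul_le_of_le_one_left (norm_nonneg _) (bb_le x)

lemma apx_polyb {ν : Measure ℝ} (hae : ∀ᵐ x ∂ν, 0 ≤ x) (hb : Apx ν (fun x => (bb x : ℂ)))
    (P : ℂ[X]) : Apx ν (fun x => P.eval (bb x : ℂ)) := by
  have hpow : ∀ n : ℕ, Apx ν (fun x => (bb x : ℂ) ^ n) := by
    intro n
    induction n with
    | zero => simpa using apx_poly ν 1
    | succ n ih =>
      have := apx_mulb hae hb (bb_contC.pow n) ih
      simpa [pow_succ'] using this
  induction P using Polynomial.induction_on' with
  | add p q hp hq =>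
    have := apx_add (p.continuous.comp bb_contC) (q.continuous.comp bb_contC) hp hq
    simpa using this
  | monomial n a =>
    have := apx_smul a (hpow n)
    simpa using this

lemma apx_cc {ν : Measure ℝ} [IsFiniteMeasure ν] (hae : ∀ᵐ x ∂ν, 0 ≤ x)
    (hb : Apx ν (fun x => (bb x : ℂ)))
    (g : ℝ → ℂ) (hg : Continuous g) (hc : HasCompactSupport g) : Apx ν g := by
  refine apx_lim hg fun ε hε => ?_
  let G : ℝ → ℂ := fun y => if y ≤ 0 then 0 else g (1 / y - 1)
  have hG : ContinuousOn G (Set.Icc 0 1) := by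
    intro y hy
    apply ContinuousAt.continuousWithinAt
    rcases hy.1.eq_or_lt with h0 | h0
    · subst h0
      obtain ⟨R, hR⟩ := hc.isCompact.isBounded.exists_norm_le
      have hev : G =ᶠ[nhds 0] fun _ => 0 := by
        have hm : Set.Iio (1 / (|R| + 2)) ∈ nhds (0 : ℝ) := Iio_mem_nhds (by positivity)
        filter_upwards [hm] with y hy
        simp only [G]
        split_ifs with h
        · rfl
        · push Not at h
          by_contra hne
          have h1 := hR _ (subset_tsupport _ (Function.mem_support.2 hne))
          have hy : y < 1 / (|R| + 2) := hy
          rw [lt_div_iff₀ (by positivity)] at hy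
          have h2 : |R| + 2 < 1 / y := by
            rw [lt_div_iff₀ h]; linarith
          have h3 := (le_abs_self _).trans h1
          linarith [le_abs_self R]
      exact continuousAt_const.congr hev.symm
    · have hev : G =ᶠ[nhds y] fun y => g (1 / y - 1) := by
        filter_upwards [Ioi_mem_nhds h0] with z hz
        have hz : 0 < z := hz
        simp only [G, if_neg (not_le.2 hz)]
      refine ContinuousAt.congr ?_ hev.symm
      refine hg.continuousAt.comp' ?_
      exact (continuousAt_const.div continuousAt_id h0.ne').sub continuousAt_const
  obtain ⟨e, he0, heε⟩ : ∃ e : ℝ, 0 < e ∧ ENNReal.ofReal e ≤ ε := by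
    refine ⟨(min ε 1).toReal, ?_, ?_⟩
    · exact ENNReal.toReal_pos (by simp [hε]) (by simp)
    · rw [ENNReal.ofReal_toReal (by simp)]; exact min_le_left _ _
  set K := ν Set.univ ^ (2 : ENNReal).toReal⁻¹ with hK
  have hKt : K ≠ ⊤ := ENNReal.rpow_ne_top_of_nonneg (by positivity) (measure_ne_top _ _)
  set δ := e / (2 * (K.toReal + 1)) with hδ
  have hk0 : 0 ≤ K.toReal := ENNReal.toReal_nonneg
  have hδ0 : 0 < δ := by positivity
  obtain ⟨p1, hp1⟩ := exists_polynomial_near_of_continuousOn 0 1 (fun y => (G y).re)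
    (Complex.continuous_re.comp_continuousOn hG) δ hδ0
  obtain ⟨p2, hp2⟩ := exists_polynomial_near_of_continuousOn 0 1 (fun y => (G y).im)
    (Complex.continuous_im.comp_continuousOn hG) δ hδ0
  let P : ℂ[X] := p1.map (algebraMap ℝ ℂ) + C Complex.I * p2.map (algebraMap ℝ ℂ)
  have hP : ∀ y : ℝ, P.eval (y : ℂ) = (p1.eval y : ℝ) + Complex.I * (p2.eval y : ℝ) := by
    intro y
    have h : ∀ p : ℝ[X], (p.map (algebraMap ℝ ℂ)).eval (y : ℂ) = (p.eval y : ℝ) := by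
      intro p
      have := eval_map_apply (p := p) (algebraMap ℝ ℂ) y
      simpa using this
    simp only [P, eval_add, eval_mul, eval_C, h]
  refine ⟨fun x => P.eval (bb x : ℂ), P.continuous.comp bb_contC, apx_polyb hae hb P, ?_⟩
  have hbd : ∀ᵐ x ∂ν, ‖g x - P.eval (bb x : ℂ)‖ ≤ 2 * δ := by
    filter_upwards [hae] with x hx
    have hgx : g x = G (bb x) := by
      simp only [G, if_neg (not_le.2 (bb_pos x))]
      congr 1
      rw [bb, abs_of_nonneg hx, one_div_one_div]; ring
    have h1 := hp1 (bb x) ⟨(bb_pos x).le, bb_le x⟩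
    have h2 := hp2 (bb x) ⟨(bb_pos x).le, bb_le x⟩
    rw [hgx, hP]
    refine (Complex.norm_le_abs_re_add_abs_im _).trans ?_
    simp only [Complex.sub_re, Complex.sub_im, Complex.add_re, Complex.add_im, Complex.mul_re,
      Complex.mul_im, Complex.I_re, Complex.I_im, Complex.ofReal_re, Complex.ofReal_im]
    rw [abs_sub_comm] at h1 h2
    simp only [zero_mul, one_mul, mul_zero, sub_zero, add_zero, zero_add]
    linarith
  refine (eLpNorm_le_of_ae_bound hbd).trans (le_trans ?_ heε)
  rw [← hK, ← ENNReal.ofReal_toReal hKt, ← ENNReal.ofReal_mul hk0]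
  refine ENNReal.ofReal_le_ofReal ?_
  have : K.toReal * (2 * δ) = e * (K.toReal / (K.toReal + 1)) := by
    rw [hδ]; field_simp
  rw [this]
  refine mul_le_of_le_one_right he0.le ?_
  rw [div_le_one (by positivity)]; linarith

lemma dense_of_bb {ν : Measure ℝ} (hmom : HasAllMoments ν) (hae : ∀ᵐ x ∂ν, 0 ≤ x)
    (hb : Apx ν (fun x => (bb x : ℂ))) : PolyDense ν := by
  have hfin : IsFiniteMeasure ν := by
    have := hmom 0
    simpa [integrable_const_iff] using this
  have hmem : ∀ p : ℂ[X], MemLp (fun x : ℝ => p.eval (x : ℂ)) 2 ν := by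
    intro p
    simp only [eval_eq_sum_range]
    refine memLp_finset_sum _ fun i _ => MemLp.const_mul ?_ _
    rw [memLp_two_iff_integrable_sq_norm (by fun_prop)]
    refine (hmom (i * 2)).congr (Eventually.of_forall fun x => ?_)
    simp [pow_mul]
  intro f
  rw [EMetric.mem_closure_iff]
  intro ε hε
  obtain ⟨e, he0, heε⟩ := exists_between hε
  have he2 : e / 2 ≠ 0 := (ENNReal.half_pos he0.ne').ne'
  obtain ⟨g, hg1, hg2, hg3, -⟩ := (Lp.memLp f).exists_hasCompactSupport_eLpNorm_sub_le
    (by norm_num) he2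
  obtain ⟨p, hp⟩ := apx_cc hae hb g hg3 hg1 (e / 2) he2
  refine ⟨(hmem p).toLp, ⟨p, (hmem p).coeFn_toLp⟩, lt_of_le_of_lt ?_ heε⟩
  rw [Lp.edist_def]
  have e1 : eLpNorm (⇑f - ⇑((hmem p).toLp)) 2 ν =
      eLpNorm ((⇑f - g) + fun x : ℝ => g x - p.eval (x : ℂ)) 2 ν := by
    refine eLpNorm_congr_ae ?_
    filter_upwards [(hmem p).coeFn_toLp] with x hx
    simp [hx]
  rw [e1, ← ENNReal.add_halves e]
  exact (eLpNorm_add_le ((Lp.aestronglyMeasurable f).sub hg3.aestronglyMeasurable)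
    (hg3.sub (cpoly_cont p)).aestronglyMeasurable (by norm_num)).trans (add_le_add hg2 hp)

theorem stmt14 (μ : Measure ℝ) (hmom : HasAllMoments μ) (hinf : (mSupp μ).Infinite)
    (hdet : IsDeterminate μ) (hsupp : mSupp μ ⊆ Set.Ici (0 : ℝ)) :
    ∀ k : ℕ, k ≤ 2 → PolyDense (μ.withDensity fun x => ENNReal.ofReal (x ^ k)) := by
  intro k hk
  have hae : ∀ᵐ x ∂μ, 0 ≤ x := by
    have h0 : μ (Set.Iio 0) = 0 := by
      refine measure_null_of_locally_null _ fun x hx => ?_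
      have hx' : x ∉ mSupp μ := fun h => absurd (Set.mem_Ici.1 (hsupp h)) (not_le.2 (Set.mem_Iio.1 hx))
      simp only [mSupp, Set.mem_setOf_eq] at hx'
      push Not at hx'
      obtain ⟨U, hU, hU0⟩ := hx'
      exact ⟨U, mem_nhdsWithin_of_mem_nhds hU, hU0⟩
    rw [ae_iff]
    simpa [Set.Iio] using h0
  have hmeas : Measurable (fun x : ℝ => ENNReal.ofReal (x ^ k)) := by fun_prop
  have haeν := (withDensity_absolutelyContinuous μ (fun x => ENNReal.ofReal (x ^ k))).ae_le hae
  refine dense_of_bb ?_ haeν ?_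
  · intro n
    rw [integrable_withDensity_iff_integrable_smul' hmeas
      (Eventually.of_forall fun x => ENNReal.ofReal_lt_top)]
    refine (hmom (n + k)).congr ?_
    filter_upwards [hae] with x hx
    rw [ENNReal.toReal_ofReal (by positivity), abs_of_nonneg hx, smul_eq_mul, pow_add, mul_comm]
  · intro ε hε
    obtain ⟨e, he0, heε⟩ : ∃ e : ℝ, 0 < e ∧ ENNReal.ofReal e ≤ ε := by
      refine ⟨(min ε 1).toReal, ?_, ?_⟩
      · exact ENNReal.toReal_pos (by simp [hε]) (by simp)
      · rw [ENNReal.ofReal_toReal (by simp)]; exact min_le_left _ _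
    obtain ⟨s, q, hsq, hq⟩ := step_B μ hmom hdet hae (e ^ 2) (by positivity)
    have hq0 : ∀ x, 0 ≤ q.eval x := fun x => (sq_nonneg _).trans (hsq x)
    refine ⟨s, le_trans ?_ heε⟩
    rw [eLpNorm_eq_lintegral_rpow_enorm_toReal (by norm_num) (by norm_num)]
    have hle : ∫⁻ x, ‖(bb x : ℂ) - s.eval (x : ℂ)‖ₑ ^ (2 : ENNReal).toReal
        ∂(μ.withDensity fun x => ENNReal.ofReal (x ^ k)) ≤ ENNReal.ofReal (e ^ 2) := by
      rw [lintegral_withDensity_eq_lintegral_mul _ hmeas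
        (by
          have : Measurable (fun x : ℝ => (bb x : ℂ) - s.eval (x : ℂ)) :=
            (bb_contC.sub (cpoly_cont s)).measurable
          exact this.enorm.pow_const _)]
      refine le_trans (lintegral_mono_ae (g := fun x => ENNReal.ofReal (q.eval x)) ?_) ?_
      · filter_upwards [hae] with x hx
        have h1 : ‖(bb x : ℂ) - s.eval (x : ℂ)‖ₑ ^ (2 : ENNReal).toReal =
            ENNReal.ofReal (‖(bb x : ℂ) - s.eval (x : ℂ)‖ ^ 2) := by
          rw [ENNReal.toReal_ofNat, ENNReal.rpow_ofNat, ← ofReal_norm,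
            ENNReal.ofReal_pow (norm_nonneg _)]
        rw [Pi.mul_apply, h1, ← ENNReal.ofReal_mul (by positivity)]
        refine ENNReal.ofReal_le_ofReal (le_trans ?_ (hsq x))
        have h2 : (1 : ℂ) - ((x : ℂ) + 1) * s.eval (x : ℂ) =
            ((1 + x : ℝ) : ℂ) * ((bb x : ℂ) - s.eval (x : ℂ)) := by
          have hx1 : (1 + (x : ℂ)) ≠ 0 := by
            have : (1 + x) ≠ 0 := by positivity
            exact_mod_cast this
          rw [bb, abs_of_nonneg hx]
          push_cast
          field_simp
          ring
        rw [h2, norm_mul, mul_pow, Complex.norm_real, Real.norm_of_nonneg (by positivity)]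
        refine mul_le_mul_of_nonneg_right ?_ (by positivity)
        interval_cases k <;> nlinarith
      · rw [← ofReal_integral_eq_lintegral_ofReal (poly_int hmom q) (Eventually.of_forall hq0)]
        exact ENNReal.ofReal_le_ofReal hq.le
    refine (ENNReal.rpow_le_rpow hle (by positivity)).trans ?_
    rw [ENNReal.ofReal_rpow_of_nonneg (by positivity) (by positivity)]
    refine ENNReal.ofReal_le_ofReal (le_of_eq ?_)
    rw [ENNReal.toReal_ofNat, ← Real.sqrt_eq_rpow, Real.sqrt_sq he0.le]
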